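/- For any (u,φ), (v,ψ) ∈ Ũ(H), one has d̃((u,φ), (v,ψ)) = m, i.e. the geodesic distance in the universal cover of U(H) equals the minimum over θ ∈ R of max_j |θ_j|. -/

import Mathlib

noncomputable section

abbrev Hsp (N : ℕ) : Type := EuclideanSpace ℂ (Fin N)

abbrev Op (N : ℕ) : Type := Hsp N →L[ℂ] Hsp N

/-- A map `γ : ℝ → E` is piecewise C¹ on `[a,b]` if there is a partition
`a = τ 0 ≤ τ 1 ≤ ⋯ ≤ τ n = b` such that `γ` is C¹ on each subinterval. -/
def PiecewiseC1On {E : Type*} [NormedAddCommGroup E] [NormedSpace ℝ E]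
    (γ : ℝ → E) (a b : ℝ) : Prop :=
  ∃ (n : ℕ) (τ : ℕ → ℝ), τ 0 = a ∧ τ n = b ∧ (∀ i < n, τ i ≤ τ (i + 1)) ∧
    ∀ i < n, ContDiffOn ℝ 1 γ (Set.Icc (τ i) (τ (i + 1)))

/-- The length `L(γ) = ∫_a^b ‖γ'(t)‖ dt` of a curve. -/
def pathLength {E : Type*} [NormedAddCommGroup E] [NormedSpace ℝ E]
    (γ : ℝ → E) (a b : ℝ) : ℝ :=
  ∫ t in a..b, ‖deriv γ t‖

/-- Geodesic distance on the unitary group of `EuclideanSpace ℂ (Fin N)`, for the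
Finsler metric given by the operator norm: the infimum of lengths of piecewise C¹
curves in the unitary group joining `u` to `v`. -/
def geoDist (N : ℕ) (u v : Op N) : ℝ :=
  sInf {l | ∃ (a b : ℝ) (γ : ℝ → Op N), a ≤ b ∧ PiecewiseC1On γ a b ∧
    (∀ t ∈ Set.Icc a b, γ t ∈ unitary (Op N)) ∧ γ a = u ∧ γ b = v ∧
    l = pathLength γ a b}

/-- `(u, φ)` belongs to the realization `Ũ(H) = {(u,φ) : det u = e^{iφ}}` of the
universal cover of the unitary group. -/
def InUCover (N : ℕ) (u : Op N) (φ : ℝ) : Prop :=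
  u ∈ unitary (Op N) ∧
    LinearMap.det (u : Hsp N →ₗ[ℂ] Hsp N) = Complex.exp (φ * Complex.I)

/-- Geodesic distance on the universal cover `Ũ(H)`: the infimum of the lengths
`∫ ‖γ'(t)‖ dt` over piecewise C¹ curves `t ↦ (γ t, f t)` in `Ũ(H)` joining
`(u, φ)` to `(v, ψ)`. -/
def ucoverDist (N : ℕ) (u : Op N) (φ : ℝ) (v : Op N) (ψ : ℝ) : ℝ :=
  sInf {l | ∃ (a b : ℝ) (γ : ℝ → Op N) (f : ℝ → ℝ), a ≤ b ∧
    PiecewiseC1On (fun t => (γ t, f t)) a b ∧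
    (∀ t ∈ Set.Icc a b, InUCover N (γ t) (f t)) ∧
    γ a = u ∧ f a = φ ∧ γ b = v ∧ f b = ψ ∧
    l = pathLength γ a b}

/-- The multiset of eigenvalues (with multiplicity) of an endomorphism, i.e. the
roots of its characteristic polynomial. -/
def eigenvalueMultiset (N : ℕ) (w : Op N) : Multiset ℂ :=
  (LinearMap.charpoly (w : Hsp N →ₗ[ℂ] Hsp N)).roots

/-- `θ ∈ R`: `(e^{iθ_j})_j` is the family of eigenvalues of `w` (with multiplicity)
and `∑ θ_j = c`. -/
def InRSet (N : ℕ) (w : Op N) (c : ℝ) (θ : Fin N → ℝ) : Prop :=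
  Multiset.map (fun j => Complex.exp ((θ j : ℂ) * Complex.I)) Finset.univ.val
      = eigenvalueMultiset N w ∧ ∑ j, θ j = c

/-- `m = min { max_j |θ_j| : θ ∈ R }`. -/
def mval (N : ℕ) (w : Op N) (c : ℝ) : ℝ :=
  sInf {x | ∃ θ : Fin N → ℝ, InRSet N w c θ ∧ x = ⨆ j, |θ j|}

end

/-!
For the lower bound translate the curve so that it starts at the identity, and let `ℓ` be its
arclength increased by a small `ε`. The operator `exp (-iℓ) w` rotates clockwise: the speed of `w`
is at most that of the scalar factor. By positivity of the Fejér kernel, the trace of the Fejér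
mean of a sawtooth at this operator, corrected by the lifted phase of its determinant, is therefore
monotone, although single eigenvalues need not be differentiable. Letting the order of the mean go
to infinity bounds the final phase from above by the sum of the largest lifts of the eigenvalue
angles that are at most `ℓ`; the adjoint curve bounds it from below by the sum of the smallest
lifts that are at least `-ℓ`. Moving from the smallest to the largest lifts in steps of `2π`
meets the phase exactly, at some `θ ∈ R` with `|θ_j| ≤ ℓ`. The upper bound is attained by the
curve `t ↦ exp (itΘ) u`, where `Θ` has eigenvalues `θ_j`.
-/

noncomputable section

open Complex Finset Module
open scoped ComplexConjugate InnerProductSpace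

section FejerKernel

variable {R : Type*} [Ring R] [StarRing R] {y : R}

lemma star_geom_sum_mul_pow (hy : star y * y = 1) (m : ℕ) :
    star (∑ k ∈ range m, y ^ k) * y ^ m = ∑ d ∈ range m, y ^ (d + 1) := by
  induction m with
  | zero => simp
  | succ m ih =>
    have hpow : star y ^ m * y ^ m = 1 := pow_mul_pow_eq_one m hy
    calc star (∑ k ∈ range (m + 1), y ^ k) * y ^ (m + 1)
        = (star (∑ k ∈ range m, y ^ k) * y ^ m) * y + (star y ^ m * y ^ m) * y := by
          rw [sum_range_succ, star_add, star_pow, pow_succ]; noncomm_ring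
      _ = ∑ d ∈ range (m + 1), y ^ (d + 1) := by
          rw [ih, hpow, sum_range_succ', sum_mul]; simp [pow_succ]

lemma fejerKernel_eq_star_mul_self (hy : star y * y = 1) (n : ℕ) :
    ∑ m ∈ range n, (1 + ∑ d ∈ range m, (y ^ (d + 1) + star y ^ (d + 1))) =
      star (∑ k ∈ range n, y ^ k) * ∑ k ∈ range n, y ^ k := by
  induction n with
  | zero => simp
  | succ m ih =>
    have hpow : star (y ^ m) * y ^ m = 1 := by rw [star_pow]; exact pow_mul_pow_eq_one m hy
    have hcross := star_geom_sum_mul_pow hy m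
    have hcross_star : star (y ^ m) * ∑ k ∈ range m, y ^ k = ∑ d ∈ range m, star y ^ (d + 1) := by
      simpa only [star_mul, star_star, star_sum, star_pow] using congrArg star hcross
    rw [sum_range_succ, ih, sum_range_succ _ m, star_add, add_mul, mul_add, mul_add, hpow, hcross,
      hcross_star, sum_add_distrib]
    abel

end FejerKernel

section FejerSawtooth

variable {A : Type*} [NormedRing A] [NormedAlgebra ℂ A] {τ : A →L[ℂ] ℂ} {n : ℕ}

/-- `n` times the `n`-th Fejér mean of the sawtooth `x ↦ x + π` on `(-2π, 0)`, evaluated through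
the functional `τ` at `y`: the Fourier series `∑ -2 sin (k x) / k` of the sawtooth is read as
`∑ -2 Im τ (y ^ k) / k`. With `τ` the identity of `ℂ` and `y = exp (i x)` this is the scalar
Fejér mean; with `τ` the trace it is the sum of these over the eigenvalues of `y`. -/
def fejerSawtooth (τ : A →L[ℂ] ℂ) (n : ℕ) (y : A) : ℝ :=
  ∑ m ∈ range n, ∑ d ∈ range m, -(2 * (τ (y ^ (d + 1))).im / (d + 1))

lemma continuous_fejerSawtooth : Continuous (fejerSawtooth τ n) := by
  unfold fejerSawtooth
  fun_prop

lemma hasDerivAt_im_tracial_pow (hτ : ∀ a b, τ (a * b) = τ (b * a)) {y : ℝ → A} {y' : A} {t : ℝ}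
    (hy : HasDerivAt y y' t) (d : ℕ) :
    HasDerivAt (fun s => (τ (y s ^ (d + 1))).im) ((d + 1) * (τ (y t ^ d * y')).im) t := by
  have hτ_pow : τ (∑ i ∈ range (d + 1), y t ^ ((d + 1).pred - i) * y' * y t ^ i) =
      ((d + 1 : ℝ) : ℂ) * τ (y t ^ d * y') := by
    have hterm : ∀ i ∈ range (d + 1),
        τ (y t ^ ((d + 1).pred - i) * y' * y t ^ i) = τ (y t ^ d * y') := fun i hi => by
      rw [hτ, ← mul_assoc, ← pow_add, Nat.pred_succ,
        Nat.add_sub_cancel' (Nat.lt_succ_iff.mp (mem_range.mp hi))]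
    rw [map_sum, sum_congr rfl hterm]
    simp
  have hpow : HasDerivAt (fun s => y s ^ (d + 1)) _ t := hy.fun_pow' (d + 1)
  refine ((imCLM.comp (τ.restrictScalars ℝ)).hasFDerivAt.comp_hasDerivAt t hpow).congr_deriv ?_
  change (τ _).im = _
  rw [hτ_pow, im_ofReal_mul]

variable [StarRing A]

lemma im_tracial_star_pow_mul (hτ : ∀ a b, τ (a * b) = τ (b * a))
    (hτ_star : ∀ a, τ (star a) = conj (τ a)) {y B : A} (hB : star B = -B) (k : ℕ) :
    (τ (star y ^ k * B)).im = (τ (y ^ k * B)).im := by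
  have h : τ (star y ^ k * B) = -conj (τ (y ^ k * B)) := by
    rw [← hτ_star, star_mul, star_pow, hB, neg_mul, map_neg, neg_neg, hτ]
  simp [h]

-- The termwise derivative is the Fejér kernel without its constant term, and that kernel is a
-- square.
lemma hasDerivAt_fejerSawtooth (hτ : ∀ a b, τ (a * b) = τ (b * a))
    (hτ_star : ∀ a, τ (star a) = conj (τ a)) {y : ℝ → A} {B : A} {t : ℝ}
    (hy : HasDerivAt y (y t * B) t) (hunit : star (y t) * y t = 1) (hB : star B = -B) (n : ℕ) :
    HasDerivAt (fun s => fejerSawtooth τ n (y s)) (n * (τ B).im -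
      (τ (star (∑ k ∈ range n, y t ^ k) * (∑ k ∈ range n, y t ^ k) * B)).im) t := by
  have hterms : HasDerivAt (fun s => fejerSawtooth τ n (y s))
      (∑ m ∈ range n, ∑ d ∈ range m, -(2 * (τ (y t ^ (d + 1) * B)).im)) t := by
    refine HasDerivAt.fun_sum fun m _ => HasDerivAt.fun_sum fun d _ => ?_
    have hd : (d : ℝ) + 1 ≠ 0 := by positivity
    refine (((hasDerivAt_im_tracial_pow hτ hy d).const_mul 2).div_const _).fun_neg.congr_deriv ?_
    rw [← mul_assoc (y t ^ d), ← pow_succ]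
    field_simp
  have hconst : (τ (n * B)).im = n * (τ B).im := by
    rw [← nsmul_eq_mul, map_nsmul, nsmul_eq_mul, ← ofReal_natCast, im_ofReal_mul]
  refine hterms.congr_deriv ?_
  rw [← fejerKernel_eq_star_mul_self hunit n]
  simp only [sum_mul, add_mul, map_sum, map_add, im_sum, add_im, hconst,
    im_tracial_star_pow_mul hτ hτ_star hB, sum_add_distrib, sum_const, card_range, nsmul_eq_mul,
    mul_one, sum_neg_distrib, ← mul_sum]
  ring

end FejerSawtooth

section ScalarSawtooth

lemma hasDerivAt_fejerSawtooth_exp (n : ℕ) (x : ℝ) :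
    HasDerivAt (fun s : ℝ => fejerSawtooth (.id ℂ ℂ) n (exp (s * I)))
      (n - ‖∑ k ∈ range n, exp (x * I) ^ k‖ ^ 2) x := by
  have hexp : HasDerivAt (fun s : ℝ => exp (s * I)) (exp (x * I) * I) x := by
    simpa using ((hasDerivAt_id x).ofReal_comp.mul_const I).cexp
  have hunit : star (exp (x * I)) * exp (x * I) = 1 := by
    rw [star_def, conj_mul', norm_exp_ofReal_mul_I]; simp
  refine (hasDerivAt_fejerSawtooth (τ := .id ℂ ℂ) (fun a b => mul_comm a b) (fun _ => rfl)
    hexp hunit (by simp) n).congr_deriv ?_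
  rw [star_def, conj_mul', ← ofReal_pow]
  simp only [ContinuousLinearMap.id_apply, I_im, im_ofReal_mul, mul_one]

lemma fejerSawtooth_one (n : ℕ) : fejerSawtooth (.id ℂ ℂ) n 1 = 0 := by
  simp [fejerSawtooth]

lemma fejerSawtooth_neg_one (n : ℕ) : fejerSawtooth (.id ℂ ℂ) n (-1) = 0 := by
  have him (k : ℕ) : ((-1 : ℂ) ^ k).im = 0 := by
    rcases neg_one_pow_eq_or ℂ k with h | h <;> simp [h]
  simp [fejerSawtooth, him]

lemma exp_mul_I_ne_one {x : ℝ} (hx : x ∈ Set.Ioo (-(2 * Real.pi)) 0) : exp (x * I) ≠ 1 := by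
  intro h
  have hcos : Real.cos x = 1 := by simpa [exp_ofReal_mul_I_re] using congrArg re h
  exact hx.2.ne ((Real.cos_eq_one_iff_of_lt_of_lt hx.1 (by linarith [hx.2, Real.pi_pos])).mp hcos)

lemma norm_geom_sum_sq_le_div {z : ℂ} (hz : ‖z‖ = 1) (hz1 : z ≠ 1) (n : ℕ) :
    ‖∑ k ∈ range n, z ^ k‖ ^ 2 ≤ 4 / ‖z - 1‖ ^ 2 := by
  have hpos : 0 < ‖z - 1‖ := norm_pos_iff.mpr (sub_ne_zero.mpr hz1)
  have hnum : ‖z ^ n - 1‖ ≤ 2 := (norm_sub_le _ _).trans (by simp [hz, one_add_one_eq_two])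
  rw [geom_sum_eq hz1, norm_div, div_pow]
  gcongr
  nlinarith [norm_nonneg (z ^ n - 1)]

lemma exists_abs_fejerSawtooth_sub_le {x : ℝ} (hx : x ∈ Set.Ioo (-(2 * Real.pi)) 0) :
    ∃ C, ∀ n : ℕ, |fejerSawtooth (.id ℂ ℂ) n (exp (x * I)) - n * (x + Real.pi)| ≤ C := by
  have hsub : Set.uIcc (-Real.pi) x ⊆ Set.Ioo (-(2 * Real.pi)) 0 :=
    Set.ordConnected_Ioo.uIcc_subset ⟨by linarith [Real.pi_pos], by linarith [Real.pi_pos]⟩ hx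
  obtain ⟨K, hK⟩ := (isCompact_uIcc (a := -Real.pi) (b := x)).exists_bound_of_continuousOn
    (f := fun s : ℝ => (4 : ℝ) / ‖exp (s * I) - 1‖ ^ 2)
    (ContinuousOn.div (by fun_prop) (by fun_prop) fun s hs =>
      pow_ne_zero 2 (norm_ne_zero_iff.mpr (sub_ne_zero.mpr (exp_mul_I_ne_one (hsub hs)))))
  refine ⟨K * ‖x - -Real.pi‖, fun n => ?_⟩
  have hderiv : ∀ s ∈ Set.uIcc (-Real.pi) x, HasDerivWithinAt
      (fun s : ℝ => fejerSawtooth (.id ℂ ℂ) n (exp (s * I)) - n * s)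
      (-‖∑ k ∈ range n, exp (s * I) ^ k‖ ^ 2) (Set.uIcc (-Real.pi) x) s := fun s _ =>
    (((hasDerivAt_fejerSawtooth_exp n s).sub ((hasDerivAt_id s).const_mul (n : ℝ))).congr_deriv
      (by ring)).hasDerivWithinAt
  have hbound : ∀ s ∈ Set.uIcc (-Real.pi) x, ‖-‖∑ k ∈ range n, exp (s * I) ^ k‖ ^ 2‖ ≤ K :=
    fun s hs => by
      rw [norm_neg, Real.norm_of_nonneg (by positivity)]
      exact (norm_geom_sum_sq_le_div (norm_exp_ofReal_mul_I s) (exp_mul_I_ne_one (hsub hs)) n).trans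
        ((le_abs_self _).trans (hK s hs))
  have hmvt := Convex.norm_image_sub_le_of_norm_hasDerivWithin_le hderiv hbound
    (convex_uIcc _ _) Set.left_mem_uIcc Set.right_mem_uIcc
  have hneg_pi : exp ((-Real.pi : ℝ) * I) = -1 := by simp [exp_neg]
  rw [hneg_pi, fejerSawtooth_neg_one, Real.norm_eq_abs] at hmvt
  convert hmvt using 2
  ring

end ScalarSawtooth

section Trace

variable {E : Type*} [NormedAddCommGroup E] [InnerProductSpace ℂ E] [FiniteDimensional ℂ E]

/-- The trace of operators on a finite-dimensional space, as a continuous linear functional. -/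
def traceCLM (E : Type*) [NormedAddCommGroup E] [InnerProductSpace ℂ E] [FiniteDimensional ℂ E] :
    (E →L[ℂ] E) →L[ℂ] ℂ :=
  LinearMap.toContinuousLinearMap (LinearMap.trace ℂ E ∘ₗ ContinuousLinearMap.coeLM ℂ)

lemma traceCLM_apply (T : E →L[ℂ] E) : traceCLM E T = LinearMap.trace ℂ E T := rfl

lemma traceCLM_eq_sum_inner {ι : Type*} [Fintype ι] (b : OrthonormalBasis ι ℂ E) (T : E →L[ℂ] E) :
    traceCLM E T = ∑ i, ⟪b i, T (b i)⟫_ℂ := by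
  simp [traceCLM_apply, LinearMap.trace_eq_sum_inner _ b]

lemma traceCLM_one : traceCLM E 1 = finrank ℂ E :=
  LinearMap.trace_one ℂ E

lemma traceCLM_mul_comm (S T : E →L[ℂ] E) : traceCLM E (S * T) = traceCLM E (T * S) :=
  LinearMap.trace_mul_comm ℂ (S : E →ₗ[ℂ] E) T

variable [CompleteSpace E]

lemma traceCLM_star (T : E →L[ℂ] E) : traceCLM E (star T) = conj (traceCLM E T) := by
  simp [traceCLM_eq_sum_inner (stdOrthonormalBasis ℂ E), ContinuousLinearMap.star_eq_adjoint,
    ContinuousLinearMap.adjoint_inner_right]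

lemma im_traceCLM_star_mul_self_mul_nonpos {T : E →L[ℂ] E} (hT : ∀ x, (⟪x, T x⟫_ℂ).im ≤ 0)
    (D : E →L[ℂ] E) : (traceCLM E (star D * D * T)).im ≤ 0 := by
  rw [mul_assoc, traceCLM_mul_comm, traceCLM_eq_sum_inner (stdOrthonormalBasis ℂ E), im_sum]
  refine sum_nonpos fun i _ => ?_
  simpa [ContinuousLinearMap.star_eq_adjoint, ContinuousLinearMap.adjoint_inner_left] using
    hT (star D (stdOrthonormalBasis ℂ E i))

end Trace

section Determinant

variable {E : Type*} [NormedAddCommGroup E] [InnerProductSpace ℂ E] [FiniteDimensional ℂ E]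

lemma differentiable_det : Differentiable ℂ (ContinuousLinearMap.det : (E →L[ℂ] E) → ℂ) := by
  let b := stdOrthonormalBasis ℂ E
  have hdet : (ContinuousLinearMap.det : (E →L[ℂ] E) → ℂ) = fun T =>
      ∑ σ : Equiv.Perm (Fin (finrank ℂ E)), (Equiv.Perm.sign σ : ℂ) *
        ∏ i, innerSL ℂ (b (σ i)) (T (b i)) := by
    ext T
    simp [ContinuousLinearMap.det, ← LinearMap.det_toMatrix b.toBasis, Matrix.det_apply',
      LinearMap.toMatrix_apply, OrthonormalBasis.repr_apply_apply]
  rw [hdet]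
  fun_prop

lemma hasDerivAt_det_one_add_smul (T : E →L[ℂ] E) :
    HasDerivAt (fun z : ℂ => (1 + z • T).det) (traceCLM E T) 0 := by
  let b := (stdOrthonormalBasis ℂ E).toBasis
  let M := LinearMap.toMatrix b b T
  have hdet (z : ℂ) : (1 + z • T).det =
      (Matrix.det (1 + (Polynomial.X : Polynomial ℂ) • M.map Polynomial.C)).eval z := by
    have : (1 + z • T).det = (1 + z • M).det := by
      rw [ContinuousLinearMap.det, ← LinearMap.det_toMatrix b]
      simp [M, LinearMap.toMatrix_one]
    rw [this]
    simp [eval_det, ← Matrix.smul_eq_mul_diagonal]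
  simp_rw [hdet]
  refine (Polynomial.hasDerivAt _ _).congr_deriv ?_
  rw [Matrix.derivative_det_one_add_X_smul, traceCLM_apply, LinearMap.trace_eq_matrix_trace ℂ b]

lemma hasFDerivAt_det_one :
    HasFDerivAt (ContinuousLinearMap.det : (E →L[ℂ] E) → ℂ) (traceCLM E) 1 := by
  have hdet := (differentiable_det (1 : E →L[ℂ] E)).hasFDerivAt
  convert hdet
  ext T
  have hline : HasDerivAt (fun z : ℂ => 1 + z • T) T 0 := by
    simpa using ((hasDerivAt_id (0 : ℂ)).smul_const T).const_add 1
  have hdet' : HasFDerivAt ContinuousLinearMap.det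
      (fderiv ℂ ContinuousLinearMap.det (1 : E →L[ℂ] E)) (1 + (0 : ℂ) • T) := by simpa using hdet
  have hcomp : HasDerivAt (ContinuousLinearMap.det ∘ fun z : ℂ => 1 + z • T) _ 0 :=
    hdet'.comp_hasDerivAt 0 hline
  exact (hasDerivAt_det_one_add_smul T).unique hcomp

variable [CompleteSpace E]

lemma hasDerivAt_det_of_mem_unitary {w : ℝ → E →L[ℂ] E} {w' : E →L[ℂ] E} {t : ℝ}
    (hw : HasDerivAt w w' t) (hunit : w t ∈ unitary (E →L[ℂ] E)) :
    HasDerivAt (fun s => (w s).det) ((w t).det * traceCLM E (star (w t) * w')) t := by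
  have hfactor (s : ℝ) : (w s).det = (w t).det * (star (w t) * w s).det := by
    rw [← LinearMap.det_comp]
    change _ = (w t * (star (w t) * w s)).det
    rw [← mul_assoc, Unitary.mul_star_self_of_mem hunit, one_mul]
  have hone : HasFDerivAt (𝕜 := ℝ) ContinuousLinearMap.det ((traceCLM E).restrictScalars ℝ)
      (star (w t) * w t) := by
    rw [Unitary.star_mul_self_of_mem hunit]
    exact hasFDerivAt_det_one.restrictScalars ℝ
  have hcomp : HasDerivAt (ContinuousLinearMap.det ∘ fun s => star (w t) * w s)
      (traceCLM E (star (w t) * w')) t :=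
    hone.comp_hasDerivAt t (hw.const_mul (star (w t)))
  exact (hcomp.const_mul (w t).det).congr_of_eventuallyEq (.of_forall hfactor)

end Determinant

section Diagonal

variable {ι E : Type*} [Fintype ι] [DecidableEq ι] [NormedAddCommGroup E] [InnerProductSpace ℂ E]
  [FiniteDimensional ℂ E] [CompleteSpace E]

/-- The operators that are diagonal in the orthonormal basis `b`, as a representation of the
`⋆`-algebra `ι → ℂ` of their possible eigenvalues. -/
def diagonalOp (b : OrthonormalBasis ι ℂ E) : (ι → ℂ) →⋆ₐ[ℂ] (E →L[ℂ] E) :=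
  let toCLM : (E →ₗ[ℂ] E) ≃⋆ₐ[ℂ] (E →L[ℂ] E) :=
    { LinearMap.toContinuousLinearMap with
      map_mul' := fun _ _ => rfl
      map_star' := LinearMap.adjoint_toContinuousLinearMap }
  let diagonal : (ι → ℂ) →⋆ₐ[ℂ] Matrix ι ι ℂ :=
    { Matrix.diagonalAlgHom ℂ with
      map_star' := fun μ => (Matrix.diagonal_conjTranspose μ).symm }
  ((LinearMap.toMatrixOrthonormal b).symm.trans toCLM : _ →⋆ₐ[ℂ] _).comp diagonal

variable (b : OrthonormalBasis ι ℂ E) (μ : ι → ℂ)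

lemma toMatrix_diagonalOp :
    LinearMap.toMatrix b.toBasis b.toBasis (diagonalOp b μ : E →ₗ[ℂ] E) = Matrix.diagonal μ :=
  (LinearMap.toMatrixOrthonormal b).apply_symm_apply _

lemma norm_diagonalOp_le : ‖diagonalOp b μ‖ ≤ ‖μ‖ :=
  NonUnitalStarAlgHom.norm_apply_le _ μ

lemma det_diagonalOp : (diagonalOp b μ).det = ∏ i, μ i := by
  rw [ContinuousLinearMap.det, ← LinearMap.det_toMatrix b.toBasis, toMatrix_diagonalOp,
    Matrix.det_diagonal]

lemma traceCLM_diagonalOp : traceCLM E (diagonalOp b μ) = ∑ i, μ i := by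
  rw [traceCLM_apply, LinearMap.trace_eq_matrix_trace ℂ b.toBasis, toMatrix_diagonalOp,
    Matrix.trace_diagonal]

lemma roots_charpoly_diagonalOp :
    (LinearMap.charpoly (diagonalOp b μ : E →ₗ[ℂ] E)).roots = univ.val.map μ := by
  rw [← LinearMap.charpoly_toMatrix _ b.toBasis, toMatrix_diagonalOp, Matrix.charpoly_diagonal]
  simpa only [Multiset.map_map, prod_eq_multiset_prod, Function.comp_def] using
    Polynomial.roots_multiset_prod_X_sub_C (univ.val.map μ)

lemma fejerSawtooth_diagonalOp (n : ℕ) : fejerSawtooth (traceCLM E) n (diagonalOp b μ) =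
    ∑ i, fejerSawtooth (.id ℂ ℂ) n (μ i) := by
  simp only [fejerSawtooth, ← map_pow, traceCLM_diagonalOp, Pi.pow_apply, im_sum,
    ContinuousLinearMap.id_apply]
  rw [sum_comm]
  refine sum_congr rfl fun m _ => ?_
  rw [sum_comm]
  refine sum_congr rfl fun d _ => ?_
  rw [sum_neg_distrib, ← sum_div, ← mul_sum]

lemma norm_eq_one_of_diagonalOp_mem_unitary
    (h : diagonalOp b μ ∈ unitary (E →L[ℂ] E)) (i : ι) : ‖μ i‖ = 1 := by
  have hinj : Function.Injective (diagonalOp b) := fun μ ν hμν => by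
    simpa only [toMatrix_diagonalOp, Matrix.diagonal_injective.eq_iff] using
      congrArg (fun T : E →L[ℂ] E => LinearMap.toMatrix b.toBasis b.toBasis (T : E →ₗ[ℂ] E)) hμν
  have hstar : star μ * μ = 1 := hinj <| by
    rw [map_mul, map_star, map_one, Unitary.star_mul_self_of_mem h]
  have hi : conj (μ i) * μ i = 1 := congrFun hstar i
  rw [conj_mul', ← ofReal_pow, ofReal_eq_one] at hi
  exact (pow_eq_one_iff_of_nonneg (norm_nonneg _) two_ne_zero).mp hi

lemma diagonalOp_exp_mem_unitary (θ : ι → ℝ) :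
    diagonalOp b (fun i => exp (θ i * I)) ∈ unitary (E →L[ℂ] E) := by
  have hunit : (fun i => exp (θ i * I)) ∈ unitary (ι → ℂ) :=
    Unitary.mem_iff_star_mul_self.mpr <| funext fun i => by
      simp [conj_mul', norm_exp_ofReal_mul_I]
  exact Unitary.map_mem (diagonalOp b) hunit

lemma diagonalOp_apply_self (i : ι) : diagonalOp b μ (b i) = μ i • b i := by
  refine b.toBasis.repr.injective (Finsupp.ext fun j => ?_)
  have hentry := congrFun₂ (toMatrix_diagonalOp b μ) j i
  rw [LinearMap.toMatrix_apply, Matrix.diagonal_apply] at hentry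
  obtain rfl | hij := eq_or_ne j i
  · simpa using hentry
  · simpa [hij] using hentry

variable {b μ} in
lemma eq_diagonalOp {w : E →L[ℂ] E} (h : ∀ i, w (b i) = μ i • b i) : w = diagonalOp b μ :=
  ContinuousLinearMap.coe_injective <| b.toBasis.ext fun i => by
    simp [h, diagonalOp_apply_self]

end Diagonal

section SpectralTheorem

variable {E : Type*} [NormedAddCommGroup E] [InnerProductSpace ℂ E]
  [CompleteSpace E] (w : E →L[ℂ] E) [IsStarNormal w]

lemma star_apply_eq_conj_smul {μ : ℂ} {x : E} (hx : w x = μ • x) : star w x = conj μ • x := by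
  have hsub : IsStarNormal (w - μ • 1) := Commute.isStarNormal_sub <| by
    rw [star_smul, star_one]; exact (Commute.one_right w).smul_right _
  have hzero := (ContinuousLinearMap.IsStarNormal.adjoint_apply_eq_zero_iff hsub x).mpr
    (by simp [hx])
  rw [← ContinuousLinearMap.star_eq_adjoint, star_sub, star_smul, star_one] at hzero
  simpa [sub_eq_zero] using hzero

lemma orthogonalFamily_eigenspace_of_isStarNormal :
    OrthogonalFamily ℂ (fun μ : ℂ => End.eigenspace (w : E →ₗ[ℂ] E) μ)
      fun μ => (End.eigenspace (w : E →ₗ[ℂ] E) μ).subtypeₗᵢ := by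
  rintro μ ν hμν ⟨x, hx⟩ ⟨y, hy⟩
  change ⟪x, y⟫_ℂ = 0
  have hx' := star_apply_eq_conj_smul w (End.mem_eigenspace_iff.mp hx)
  have hy' : w y = ν • y := End.mem_eigenspace_iff.mp hy
  have h : μ * ⟪x, y⟫_ℂ = ν * ⟪x, y⟫_ℂ := by
    rw [← inner_smul_right x y ν, ← hy', ← ContinuousLinearMap.adjoint_inner_left,
      ← ContinuousLinearMap.star_eq_adjoint, hx', inner_smul_left, conj_conj]
  exact (mul_eq_mul_right_iff.mp h).resolve_left hμν

variable [FiniteDimensional ℂ E]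
open scoped ComplexStarModule

lemma iSup_eigenspace_eq_top_of_isStarNormal :
    ⨆ μ, End.eigenspace (w : E →ₗ[ℂ] E) μ = ⊤ := by
  have hcomm : Commute ((ℜ w : E →L[ℂ] E) : E →ₗ[ℂ] E) (ℑ w : E →L[ℂ] E) :=
    congrArg ContinuousLinearMap.toLinearMap (Commute.realPart_imaginaryPart w)
  rw [eq_top_iff, ← LinearMap.IsSymmetric.iSup_iSup_eigenspace_inf_eigenspace_eq_top_of_commute
    (ℜ w).2.isSymmetric (ℑ w).2.isSymmetric hcomm]
  refine iSup₂_le fun α β => le_iSup_of_le (α + I * β) fun x hx => ?_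
  have hre : (ℜ w : E →L[ℂ] E) x = α • x := End.mem_eigenspace_iff.mp hx.1
  have him : (ℑ w : E →L[ℂ] E) x = β • x := End.mem_eigenspace_iff.mp hx.2
  rw [End.mem_eigenspace_iff]
  calc w x = ((ℜ w : E →L[ℂ] E) + I • (ℑ w : E →L[ℂ] E)) x := by
        rw [realPart_add_I_smul_imaginaryPart]
    _ = (α + I * β) • x := by simp [hre, him, add_smul, mul_smul]

lemma exists_eq_diagonalOp_of_isStarNormal {N : ℕ} (hN : finrank ℂ E = N) :
    ∃ (b : OrthonormalBasis (Fin N) ℂ E) (μ : Fin N → ℂ), w = diagonalOp b μ := by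
  classical
  have hfam : OrthogonalFamily ℂ
      (fun μ : End.Eigenvalues (w : E →ₗ[ℂ] E) => End.eigenspace (w : E →ₗ[ℂ] E) μ)
      fun μ => (End.eigenspace (w : E →ₗ[ℂ] E) μ).subtypeₗᵢ :=
    (orthogonalFamily_eigenspace_of_isStarNormal w).comp Subtype.coe_injective
  have hinternal : DirectSum.IsInternal fun μ : End.Eigenvalues (w : E →ₗ[ℂ] E) =>
      End.eigenspace (w : E →ₗ[ℂ] E) μ := by
    rw [hfam.isInternal_iff, Submodule.orthogonal_eq_bot_iff,
      ← iSup_eigenspace_eq_top_of_isStarNormal w]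
    exact iSup_ne_bot_subtype _
  exact ⟨hinternal.subordinateOrthonormalBasis hN hfam, _, eq_diagonalOp fun i =>
    End.mem_eigenspace_iff.mp (hinternal.subordinateOrthonormalBasis_subordinate hN i hfam)⟩

end SpectralTheorem

lemma exists_perm_of_map_univ_eq {ι α : Type*} [Fintype ι] {f g : ι → α}
    (h : univ.val.map f = univ.val.map g) : ∃ σ : Equiv.Perm ι, ∀ i, g (σ i) = f i := by
  classical
  have hfiber (c : α) : Nonempty ({i // f i = c} ≃ {i // g i = c}) := by
    refine ⟨Fintype.equivOfCardEq ?_⟩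
    simpa only [Multiset.count_map, Fintype.card_subtype, Finset.card_def, Finset.filter_val,
      eq_comm] using congrArg (Multiset.count c) h
  exact ⟨.ofFiberEquiv fun c => (hfiber c).some,
    Equiv.ofFiberEquiv_map fun c => (hfiber c).some⟩

section PathLength

variable {E F : Type*} [NormedAddCommGroup E] [NormedSpace ℝ E] [NormedAddCommGroup F]
  [NormedSpace ℝ F] {γ : ℝ → E} {a b : ℝ}

lemma pathLength_nonneg (γ : ℝ → E) (hab : a ≤ b) : 0 ≤ pathLength γ a b :=
  intervalIntegral.integral_nonneg hab fun _ _ => norm_nonneg _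

lemma pathLength_self (γ : ℝ → E) (a : ℝ) : pathLength γ a a = 0 :=
  intervalIntegral.integral_same

lemma pathLength_linearIsometryEquiv_comp (S : E ≃ₗᵢ[ℝ] F) (γ : ℝ → E) (a b : ℝ) :
    pathLength (S ∘ γ) a b = pathLength γ a b := by
  simp only [pathLength, norm_deriv_eq_norm_fderiv, S.comp_fderiv]
  simp

lemma pathLength_star [StarAddMonoid E] [NormedStarGroup E] [StarModule ℝ E] (γ : ℝ → E)
    (a b : ℝ) : pathLength (fun t => star (γ t)) a b = pathLength γ a b := by
  simp only [pathLength, deriv.star, norm_star]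

lemma contDiff_star [StarAddMonoid E] [NormedStarGroup E] [StarModule ℝ E] {n : WithTop ℕ∞} :
    ContDiff ℝ n (star : E → E) :=
  (starL' ℝ : E ≃L[ℝ] E).contDiff

namespace PiecewiseC1On

lemma of_contDiff (hγ : ContDiff ℝ 1 γ) (hab : a ≤ b) : PiecewiseC1On γ a b :=
  ⟨1, fun i => if i = 0 then a else b, by simp, by simp, by simpa, fun _ _ => hγ.contDiffOn⟩

lemma contDiff_comp {g : E → F} (hg : ContDiff ℝ 1 g) (h : PiecewiseC1On γ a b) :
    PiecewiseC1On (g ∘ γ) a b :=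
  let ⟨n, τ, hτ0, hτn, hτ, hγ⟩ := h
  ⟨n, τ, hτ0, hτn, hτ, fun i hi => hg.comp_contDiffOn (hγ i hi)⟩

lemma induction {P : ℝ → ℝ → Prop} (refl : ∀ p, P p p)
    (trans : ∀ {p q r}, P p q → P q r → P p r)
    (piece : ∀ {p q}, p ≤ q → ContDiffOn ℝ 1 γ (Set.Icc p q) → P p q)
    (h : PiecewiseC1On γ a b) : P a b := by
  obtain ⟨n, τ, rfl, rfl, hτ, hγ⟩ := h
  suffices ∀ i ≤ n, P (τ 0) (τ i) from this n le_rfl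
  intro i hi
  induction i with
  | zero => exact refl _
  | succ i ih => exact trans (ih (by omega)) (piece (hτ i hi) (hγ i hi))

lemma le (h : PiecewiseC1On γ a b) : a ≤ b :=
  h.induction le_refl le_trans fun hpq _ => hpq

lemma continuousOn (h : PiecewiseC1On γ a b) : ContinuousOn γ (Set.Icc a b) := by
  suffices a ≤ b ∧ ContinuousOn γ (Set.Icc a b) from this.2
  refine h.induction (P := fun p q => p ≤ q ∧ ContinuousOn γ (Set.Icc p q)) (by simp) ?_
    fun hpq hγ => ⟨hpq, hγ.continuousOn⟩
  rintro p q r ⟨hpq, hγ⟩ ⟨hqr, hγ'⟩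
  rw [← Set.Icc_union_Icc_eq_Icc hpq hqr]
  exact ⟨hpq.trans hqr, hγ.union_of_isClosed hγ' isClosed_Icc isClosed_Icc⟩

lemma intervalIntegrable_norm_deriv (h : PiecewiseC1On γ a b) :
    IntervalIntegrable (fun t => ‖deriv γ t‖) MeasureTheory.volume a b := by
  refine h.induction (fun _ => .refl) IntervalIntegrable.trans fun {p q} hpq hγ => ?_
  obtain rfl | hlt := hpq.eq_or_lt
  · exact .refl
  rw [intervalIntegrable_iff_integrableOn_Ioo_of_le hpq]
  have hderivWithin : ContinuousOn (fun t => ‖derivWithin γ (Set.Icc p q) t‖) (Set.Icc p q) :=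
    (hγ.continuousOn_derivWithin (uniqueDiffOn_Icc hlt) le_rfl).norm
  refine (hderivWithin.integrableOn_Icc.mono_set Set.Ioo_subset_Icc_self).congr_fun
    (fun t ht => ?_) measurableSet_Ioo
  simp only [derivWithin_of_mem_nhds (Icc_mem_nhds ht.1 ht.2)]

lemma le_of_hasDerivAt_nonneg (h : PiecewiseC1On γ a b) {g : ℝ → ℝ}
    (hg : ContinuousOn g (Set.Icc a b))
    (hg' : ∀ t ∈ Set.Ioo a b, ContDiffAt ℝ 1 γ t → ∃ d ≥ 0, HasDerivAt g d t) : g a ≤ g b := by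
  suffices a ≤ b ∧ (Set.Icc a b ⊆ Set.Icc a b → g a ≤ g b) from this.2 subset_rfl
  refine h.induction (P := fun p q => p ≤ q ∧ (Set.Icc p q ⊆ Set.Icc a b → g p ≤ g q))
    (by simp) ?_ fun {p q} hpq hγ => ⟨hpq, fun hsub => ?_⟩
  · rintro p q r ⟨hpq, hg_pq⟩ ⟨hqr, hg_qr⟩
    exact ⟨hpq.trans hqr, fun hsub =>
      (hg_pq ((Set.Icc_subset_Icc_right hqr).trans hsub)).trans
        (hg_qr ((Set.Icc_subset_Icc_left hpq).trans hsub))⟩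
  have hpab := hsub (Set.left_mem_Icc.mpr hpq)
  have hqab := hsub (Set.right_mem_Icc.mpr hpq)
  have hderiv : ∀ t ∈ Set.Ioo p q, ∃ d ≥ 0, HasDerivAt g d t := fun t ht =>
    hg' t ⟨hpab.1.trans_lt ht.1, ht.2.trans_le hqab.2⟩
      (hγ.contDiffAt (Icc_mem_nhds ht.1 ht.2))
  choose! d hd_nonneg hd using hderiv
  refine monotoneOn_of_hasDerivWithinAt_nonneg (f' := d) (convex_Icc p q) (hg.mono hsub) ?_ ?_
    (Set.left_mem_Icc.mpr hpq) (Set.right_mem_Icc.mpr hpq) hpq <;> rw [interior_Icc]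
  · exact fun t ht => (hd t ht).hasDerivWithinAt
  · exact hd_nonneg

lemma continuousOn_pathLength (h : PiecewiseC1On γ a b) :
    ContinuousOn (pathLength γ a) (Set.Icc a b) := by
  rw [← Set.uIcc_of_le h.le]
  exact intervalIntegral.continuousOn_primitive_interval' h.intervalIntegrable_norm_deriv
    Set.left_mem_uIcc

lemma hasDerivAt_pathLength [CompleteSpace E] (h : PiecewiseC1On γ a b) {t : ℝ}
    (ht : t ∈ Set.Icc a b) (hγ : ContDiffAt ℝ 1 γ t) :
    HasDerivAt (pathLength γ a) ‖deriv γ t‖ t := by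
  have hsub : Set.uIcc a t ⊆ Set.uIcc a b := by
    rw [Set.uIcc_of_le ht.1, Set.uIcc_of_le h.le]
    exact Set.Icc_subset_Icc_right ht.2
  have hcont : ContinuousAt (deriv γ) t := (hγ.derivWithin (m := 0) le_rfl).continuousAt
  exact intervalIntegral.integral_hasDerivAt_right
    (h.intervalIntegrable_norm_deriv.mono_set hsub)
    (stronglyMeasurable_deriv γ).norm.stronglyMeasurableAtFilter
    hcont.norm

end PiecewiseC1On

end PathLength

section Lyapunov

open scoped Topology

lemma star_star_mul_eq_neg_of_hasDerivAt {A : Type*} [NormedRing A] [NormedAlgebra ℝ A] [StarRing A]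
    [ContinuousStar A] [StarModule ℝ A] {w : ℝ → A} {w' : A} {t : ℝ} (hw : HasDerivAt w w' t)
    (hunit : ∀ᶠ s in 𝓝 t, w s ∈ unitary A) : star (star (w t) * w') = -(star (w t) * w') := by
  have hconst : HasDerivAt (fun s => star (w s) * w s) 0 t :=
    (hasDerivAt_const t 1).congr_of_eventuallyEq <|
      hunit.mono fun _ hs => Unitary.star_mul_self_of_mem hs
  rw [star_mul, star_star]
  exact eq_neg_of_add_eq_zero_left ((hw.star.mul hw).unique hconst)

lemma exp_smul_mem_unitary {A : Type*} [Ring A] [StarRing A] [Algebra ℂ A] [StarModule ℂ A] {u : A}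
    (hu : u ∈ unitary A) (x : ℝ) : exp (x * I) • u ∈ unitary A := by
  have hconj : conj (exp (x * I)) * exp (x * I) = 1 := by
    rw [conj_mul', norm_exp_ofReal_mul_I]; simp
  have hexp : exp (x * I) ∈ unitary ℂ := Unitary.mem_iff_star_mul_self.mpr hconj
  exact Unitary.smul_mem_of_mem hexp hu

lemma hasDerivAt_exp_smul_of_mem_unitary {A : Type*} [NormedRing A] [NormedAlgebra ℂ A] [StarRing A]
    {w : ℝ → A} {w' : A} {ℓ : ℝ → ℝ} {ℓ' t : ℝ} (hw : HasDerivAt w w' t)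
    (hunit : w t ∈ unitary A) (hℓ : HasDerivAt ℓ ℓ' t) :
    HasDerivAt (fun s => exp ((-ℓ s : ℝ) * I) • w s)
      (exp ((-ℓ t : ℝ) * I) • w t * (star (w t) * w' - (ℓ' * I) • 1)) t := by
  refine ((hℓ.fun_neg.ofReal_comp.mul_const I).cexp.smul hw).congr_deriv ?_
  rw [mul_sub, smul_mul_assoc, ← mul_assoc (w t), Unitary.mul_star_self_of_mem hunit, one_mul,
    mul_smul_comm, mul_one, smul_smul, sub_eq_add_neg, ← neg_smul]
  congr 2
  push_cast
  ring

variable {E : Type*} [NormedAddCommGroup E] [InnerProductSpace ℂ E]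

lemma im_inner_sub_smul_one_nonpos {T : E →L[ℂ] E} {r : ℝ} (hT : ‖T‖ ≤ r) (x : E) :
    (⟪x, (T - (r * I) • 1) x⟫_ℂ).im ≤ 0 := by
  have hTx : (⟪x, T x⟫_ℂ).im ≤ r * ‖x‖ ^ 2 :=
    calc (⟪x, T x⟫_ℂ).im ≤ ‖x‖ * ‖T x‖ := (im_le_norm _).trans (norm_inner_le_norm x (T x))
      _ ≤ ‖x‖ * (r * ‖x‖) := by gcongr; exact T.le_of_opNorm_le hT x
      _ = r * ‖x‖ ^ 2 := by ring
  have hIx : (⟪x, ((r * I) • (1 : E →L[ℂ] E)) x⟫_ℂ).im = r * ‖x‖ ^ 2 := by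
    simp [inner_self_eq_norm_sq_to_K, ← ofReal_pow]
  rw [sub_apply, inner_sub_right, sub_im, hIx]
  exact sub_nonpos.mpr hTx

variable [FiniteDimensional ℂ E] [CompleteSpace E] {w : ℝ → E →L[ℂ] E} {w' : E →L[ℂ] E}
  {f ℓ : ℝ → ℝ} {f' t : ℝ}

lemma im_traceCLM_star_mul_eq_of_hasDerivAt (hw : HasDerivAt w w' t)
    (hunit : w t ∈ unitary (E →L[ℂ] E)) (hf : HasDerivAt f f' t)
    (hdet : ∀ᶠ s in 𝓝 t, (w s).det = exp (f s * I)) :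
    (traceCLM E (star (w t) * w')).im = f' := by
  have hexp : HasDerivAt (fun s => (w s).det) ((w t).det * (f' * I)) t := by
    rw [hdet.self_of_nhds]
    exact (hf.ofReal_comp.mul_const I).cexp.congr_of_eventuallyEq hdet
  have hne : (w t).det ≠ 0 := by rw [hdet.self_of_nhds]; exact exp_ne_zero _
  have htrace := mul_left_cancel₀ hne ((hasDerivAt_det_of_mem_unitary hw hunit).unique hexp)
  simp [htrace]

/-- The quantity that grows along every curve `(w, φ)` in the universal cover when `ℓ` is the
arclength: the Fejér mean of the sawtooth at the rotated operator `exp (-i ℓ) w`, minus `n` times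
the lifted determinant phase `φ - dim E * ℓ` of that operator. -/
def angularLyapunov (n : ℕ) (w : E →L[ℂ] E) (φ ℓ : ℝ) : ℝ :=
  fejerSawtooth (traceCLM E) n (exp ((-ℓ : ℝ) * I) • w) - n * (φ - finrank ℂ E * ℓ)

lemma continuousOn_angularLyapunov {s : Set ℝ} (n : ℕ) (hw : ContinuousOn w s)
    (hf : ContinuousOn f s) (hℓ : ContinuousOn ℓ s) :
    ContinuousOn (fun t => angularLyapunov n (w t) (f t) (ℓ t)) s :=
  (continuous_fejerSawtooth.comp_continuousOn (by fun_prop)).sub (by fun_prop)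

-- The rotated operator moves clockwise: its logarithmic derivative `B` has nonpositive imaginary
-- quadratic form, and the Fejér kernel is positive.
lemma exists_hasDerivAt_angularLyapunov_nonneg (n : ℕ) (hw : HasDerivAt w w' t)
    (hf : HasDerivAt f f' t) (hℓ : HasDerivAt ℓ ‖w'‖ t)
    (hunit : ∀ᶠ s in 𝓝 t, w s ∈ unitary (E →L[ℂ] E))
    (hdet : ∀ᶠ s in 𝓝 t, (w s).det = exp (f s * I)) :
    ∃ d ≥ 0, HasDerivAt (fun s => angularLyapunov n (w s) (f s) (ℓ s)) d t := by
  have hunit_t := hunit.self_of_nhds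
  set B : E →L[ℂ] E := star (w t) * w' - (‖w'‖ * I) • 1 with hB_def
  have hB_star : star B = -B := by
    rw [hB_def, star_sub, star_star_mul_eq_neg_of_hasDerivAt hw hunit, star_smul, star_one]
    simp [sub_eq_add_neg, add_comm]
  have hB_trace : (traceCLM E B).im = f' - finrank ℂ E * ‖w'‖ := by
    rw [hB_def, map_sub, map_smul, traceCLM_one, sub_im,
      im_traceCLM_star_mul_eq_of_hasDerivAt hw hunit_t hf hdet]
    simp [mul_comm]
  have hB_inner : ∀ x, (⟪x, B x⟫_ℂ).im ≤ 0 := im_inner_sub_smul_one_nonpos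
    (CStarRing.norm_mem_unitary_mul w' (Unitary.star_mem hunit_t)).le
  have hsawtooth : HasDerivAt
      (fun s => fejerSawtooth (traceCLM E) n (exp ((-ℓ s : ℝ) * I) • w s)) _ t :=
    hasDerivAt_fejerSawtooth (τ := traceCLM E) traceCLM_mul_comm traceCLM_star
      (hasDerivAt_exp_smul_of_mem_unitary hw hunit_t hℓ)
      (Unitary.star_mul_self_of_mem (exp_smul_mem_unitary hunit_t _)) hB_star n
  have hphase : HasDerivAt (fun s => n * (f s - finrank ℂ E * ℓ s))
      (n * (f' - finrank ℂ E * ‖w'‖)) t :=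
    (hf.fun_sub (hℓ.const_mul _)).const_mul _
  refine ⟨_, ?_, hsawtooth.fun_sub hphase⟩
  rw [hB_trace, ge_iff_le, sub_right_comm, sub_self, zero_sub, neg_nonneg]
  exact im_traceCLM_star_mul_self_mul_nonpos hB_inner _

lemma angularLyapunov_le_of_piecewiseC1On {a b : ℝ}
    (h : PiecewiseC1On (fun t => (w t, f t)) a b)
    (hunit : ∀ t ∈ Set.Icc a b, w t ∈ unitary (E →L[ℂ] E))
    (hdet : ∀ t ∈ Set.Icc a b, (w t).det = exp (f t * I)) (ε : ℝ) (n : ℕ) :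
    angularLyapunov n (w a) (f a) ε ≤ angularLyapunov n (w b) (f b) (ε + pathLength w a b) := by
  have hw : PiecewiseC1On w a b := h.contDiff_comp (g := Prod.fst) contDiff_fst
  have hf : PiecewiseC1On f a b := h.contDiff_comp (g := Prod.snd) contDiff_snd
  have key := h.le_of_hasDerivAt_nonneg
    (continuousOn_angularLyapunov n hw.continuousOn hf.continuousOn
      (hw.continuousOn_pathLength.const_add ε)) fun t ht hC1 => ?_
  · simpa only [pathLength_self, add_zero] using key
  have hnhds : Set.Icc a b ∈ 𝓝 t := Icc_mem_nhds ht.1 ht.2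
  have hwt : ContDiffAt ℝ 1 w t := contDiffAt_fst.comp t hC1
  have hft : ContDiffAt ℝ 1 f t := contDiffAt_snd.comp t hC1
  exact exists_hasDerivAt_angularLyapunov_nonneg n
    (hwt.differentiableAt one_ne_zero).hasDerivAt (hft.differentiableAt one_ne_zero).hasDerivAt
    ((hw.hasDerivAt_pathLength ⟨ht.1.le, ht.2.le⟩ hwt).const_add ε)
    (Filter.eventually_of_mem hnhds hunit) (Filter.eventually_of_mem hnhds hdet)

end Lyapunov

lemma exp_add_int_mul_two_pi_mul_I (x : ℝ) (n : ℤ) :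
    exp ((x + n * (2 * Real.pi) : ℝ) * I) = exp (x * I) :=
  exp_eq_exp_iff_exists_int.mpr ⟨n, by push_cast; ring⟩

lemma exp_toIocMod_mul_I (a x : ℝ) : exp (toIocMod Real.two_pi_pos a x * I) = exp (x * I) := by
  rw [← exp_add_int_mul_two_pi_mul_I _ (toIocDiv Real.two_pi_pos a x), ← zsmul_eq_mul,
    toIocMod_add_toIocDiv_zsmul]

lemma exists_eq_add_int_mul_two_pi {x y : ℝ} (h : exp (x * I) = exp (y * I)) :
    ∃ k : ℤ, x = y + k * (2 * Real.pi) := by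
  obtain ⟨k, hk⟩ := exp_eq_exp_iff_exists_int.mp h
  refine ⟨k, ofReal_injective (mul_right_cancel₀ I_ne_zero ?_)⟩
  rw [hk]
  push_cast
  ring

section LimitBound

lemma exists_fejerSawtooth_sub_le {x : ℝ} (hx : x ∈ Set.Ioc (-(2 * Real.pi)) 0) :
    ∃ C, ∀ n : ℕ, fejerSawtooth (.id ℂ ℂ) n (exp (x * I)) - n * (x + Real.pi) ≤ C := by
  obtain hlt | rfl := hx.2.lt_or_eq
  · obtain ⟨C, hC⟩ := exists_abs_fejerSawtooth_sub_le ⟨hx.1, hlt⟩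
    exact ⟨C, fun n => (abs_le.mp (hC n)).2⟩
  · refine ⟨0, fun n => ?_⟩
    have := Real.pi_pos
    simp only [ofReal_zero, zero_mul, exp_zero, fejerSawtooth_one, zero_add, zero_sub,
      Left.neg_nonpos_iff]
    positivity

lemma nonneg_of_forall_le_natCast_mul {x C : ℝ} (h : ∀ n : ℕ, C ≤ n * x) : 0 ≤ x := by
  by_contra! hx
  obtain ⟨n, hn⟩ := exists_nat_gt (C / x)
  exact (h n).not_gt ((div_lt_iff_of_neg hx).mp hn)

variable {ι E : Type*} [Fintype ι] [DecidableEq ι] [NormedAddCommGroup E] [InnerProductSpace ℂ E]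
  [FiniteDimensional ℂ E] [CompleteSpace E] {e : OrthonormalBasis ι ℂ E} {M : ι → ℝ}

lemma angularLyapunov_diagonalOp_exp (e : OrthonormalBasis ι ℂ E) (M : ι → ℝ) (φ ℓ : ℝ) (n : ℕ) :
    angularLyapunov n (diagonalOp e fun i => exp (M i * I)) φ ℓ =
      ∑ i, (fejerSawtooth (.id ℂ ℂ) n (exp ((M i - ℓ : ℝ) * I)) - n * (M i - ℓ + Real.pi)) +
        n * (∑ i, M i + Fintype.card ι * Real.pi - φ) := by
  have hrot : exp ((-ℓ : ℝ) * I) • diagonalOp e (fun i => exp (M i * I)) =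
      diagonalOp e fun i => exp ((M i - ℓ : ℝ) * I) := by
    rw [← map_smul]
    congr 1
    ext i
    rw [Pi.smul_apply, smul_eq_mul, ← exp_add]
    push_cast
    ring_nf
  rw [angularLyapunov, hrot, fejerSawtooth_diagonalOp, finrank_eq_card_basis e.toBasis]
  simp only [sum_sub_distrib, ← mul_sum, sum_add_distrib, sum_const, card_univ, nsmul_eq_mul]
  ring

-- Both sides are `n * card ι * π + O(1)`, apart from the term `n * (∑ i, M i - φ)` on the right.
lemma le_sum_of_forall_angularLyapunov_le {φ ε ℓ : ℝ} (hε : ε ∈ Set.Ioo 0 (2 * Real.pi))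
    (hM : ∀ i, M i ∈ Set.Ioc (ℓ - 2 * Real.pi) ℓ)
    (h : ∀ n, angularLyapunov n (1 : E →L[ℂ] E) 0 ε ≤
      angularLyapunov n (diagonalOp e fun i => exp (M i * I)) φ ℓ) : φ ≤ ∑ i, M i := by
  have hupper (i : ι) := exists_fejerSawtooth_sub_le (x := M i - ℓ)
    ⟨by linarith [(hM i).1], by linarith [(hM i).2]⟩
  choose C hC using hupper
  obtain ⟨C₀, hC₀⟩ := exists_abs_fejerSawtooth_sub_le (x := -ε)
    ⟨by linarith [hε.2], by linarith [hε.1]⟩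
  have hone : (1 : E →L[ℂ] E) = diagonalOp e fun _ => exp ((0 : ℝ) * I) := by
    rw [← map_one (diagonalOp e)]
    congr 1
    ext
    simp
  refine sub_nonneg.mp (nonneg_of_forall_le_natCast_mul (C := ∑ _ : ι, -C₀ - ∑ i, C i) fun n => ?_)
  have hn := h n
  simp only [hone, angularLyapunov_diagonalOp_exp, zero_sub, sum_const_zero, zero_add, sub_zero]
    at hn
  have hlower : ∑ _ : ι, -C₀ ≤
      ∑ _ : ι, (fejerSawtooth (.id ℂ ℂ) n (exp ((-ε : ℝ) * I)) - n * (-ε + Real.pi)) :=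
    sum_le_sum fun _ _ => (abs_le.mp (hC₀ n)).1
  have hsum := sum_le_sum fun i (_ : i ∈ univ) => hC i n
  linarith

lemma le_sum_toIocMod_of_piecewiseC1On {w : ℝ → E →L[ℂ] E} {f : ℝ → ℝ} {a b ε : ℝ} {x : ι → ℝ}
    (h : PiecewiseC1On (fun t => (w t, f t)) a b)
    (hunit : ∀ t ∈ Set.Icc a b, w t ∈ unitary (E →L[ℂ] E))
    (hdet : ∀ t ∈ Set.Icc a b, (w t).det = exp (f t * I)) (hwa : w a = 1) (hfa : f a = 0)
    (hwb : w b = diagonalOp e fun i => exp (x i * I)) (hε : ε ∈ Set.Ioo 0 (2 * Real.pi)) :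
    f b ≤ ∑ i, toIocMod Real.two_pi_pos (ε + pathLength w a b - 2 * Real.pi) (x i) := by
  refine le_sum_of_forall_angularLyapunov_le (e := e) hε (ℓ := ε + pathLength w a b)
    (fun i => ?_) fun n => ?_
  · have := toIocMod_mem_Ioc Real.two_pi_pos (ε + pathLength w a b - 2 * Real.pi) (x i)
    rwa [sub_add_cancel] at this
  · simpa only [hwa, hfa, hwb, exp_toIocMod_mul_I] using
      angularLyapunov_le_of_piecewiseC1On h hunit hdet ε n

end LimitBound

section Lifts

variable {ι : Type*} [Fintype ι]

lemma exists_int_between_sum_eq {p q : ι → ℤ} (hpq : p ≤ q) {k : ℤ} (hpk : ∑ i, p i ≤ k)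
    (hkq : k ≤ ∑ i, q i) : ∃ l : ι → ℤ, p ≤ l ∧ l ≤ q ∧ ∑ i, l i = k := by
  classical
  induction k, hpk using Int.leInduction with
  | base => exact ⟨p, le_rfl, hpq, rfl⟩
  | succ k _ ih =>
    obtain ⟨l, hpl, hlq, rfl⟩ := ih (by omega)
    obtain ⟨j, -, hj⟩ := exists_lt_of_sum_lt (Int.lt_of_add_one_le hkq)
    refine ⟨l + Pi.single j 1, ?_, fun i => ?_, by simp [sum_add_distrib]⟩
    · exact hpl.trans (le_add_of_nonneg_right (by simp))
    · obtain rfl | hij := eq_or_ne i j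
      · simpa using hj
      · simpa [hij] using hlq i

variable {T : ℝ} (hT : 0 < T) {x : ι → ℝ} {δ : ℝ}

lemma toIocDiv_le_toIcoDiv_of_sum_toIcoMod_le
    (h : ∑ i, toIcoMod hT (-δ) (x i) ≤ ∑ i, toIocMod hT (δ - T) (x i)) (i : ι) :
    toIocDiv hT (δ - T) (x i) ≤ toIcoDiv hT (-δ) (x i) := by
  let D (i : ι) : ℤ := toIcoDiv hT (-δ) (x i) - toIocDiv hT (δ - T) (x i)
  have hD (i : ι) : D i * T = toIocMod hT (δ - T) (x i) - toIcoMod hT (-δ) (x i) := by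
    simp only [D, toIocMod, toIcoMod, zsmul_eq_mul]
    push_cast
    ring
  have hIco (i : ι) := toIcoMod_mem_Ico hT (-δ) (x i)
  have hIoc (i : ι) := toIocMod_mem_Ioc hT (δ - T) (x i)
  suffices 0 ≤ D i from sub_nonneg.mp this
  obtain hTδ | hδT := le_or_gt T (2 * δ)
  · have : (-1 : ℝ) < D i := by nlinarith [hD i, (hIco i).2, (hIoc i).1]
    exact Int.lt_iff_add_one_le.mp (by exact_mod_cast this)
  · have hnonpos : ∀ i ∈ univ, D i ≤ 0 := fun i _ => by
      have : (D i : ℝ) < 1 := by nlinarith [hD i, (hIco i).1, (hIoc i).2]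
      exact Int.lt_add_one_iff.mp (by exact_mod_cast this)
    have hsum : 0 ≤ ∑ i, D i := by
      have : 0 ≤ (∑ i, (D i : ℝ)) * T := by
        simpa only [sum_mul, hD, sum_sub_distrib, sub_nonneg] using h
      exact_mod_cast nonneg_of_mul_nonneg_left this hT
    have hzero := (sum_eq_zero_iff_of_nonpos hnonpos).mp ((sum_nonpos hnonpos).antisymm hsum)
    exact (hzero i (mem_univ i)).ge

-- Passing from the lowest lifts in `[-δ, δ]` to the highest ones, one unit `T` at a time, every
-- admissible value of the sum is met.
lemma exists_abs_add_int_mul_le_of_sum_le {k : ℤ} {c : ℝ} (hc : c = ∑ i, x i + k * T)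
    (hlower : ∑ i, toIcoMod hT (-δ) (x i) ≤ c) (hupper : c ≤ ∑ i, toIocMod hT (δ - T) (x i)) :
    ∃ l : ι → ℤ, (∀ i, |x i + l i * T| ≤ δ) ∧ ∑ i, (x i + l i * T) = c := by
  have hpq : (fun i => -toIcoDiv hT (-δ) (x i)) ≤ fun i => -toIocDiv hT (δ - T) (x i) := fun i =>
    neg_le_neg (toIocDiv_le_toIcoDiv_of_sum_toIcoMod_le hT (hlower.trans hupper) i)
  simp only [toIcoMod, toIocMod, zsmul_eq_mul, sum_sub_distrib, ← sum_mul] at hlower hupper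
  obtain ⟨l, hpl, hlq, rfl⟩ := exists_int_between_sum_eq (k := k) hpq
    (by
      have : (∑ i, -(toIcoDiv hT (-δ) (x i) : ℝ)) ≤ k := by
        rw [sum_neg_distrib]; nlinarith
      exact_mod_cast this)
    (by
      have : (k : ℝ) ≤ ∑ i, -(toIocDiv hT (δ - T) (x i) : ℝ) := by
        rw [sum_neg_distrib]; nlinarith
      exact_mod_cast this)
  refine ⟨l, fun i => abs_le.mpr ⟨?_, ?_⟩, ?_⟩
  · have hl : (-toIcoDiv hT (-δ) (x i) : ℝ) ≤ l i := by exact_mod_cast hpl i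
    have hIco := left_le_toIcoMod hT (-δ) (x i)
    rw [toIcoMod, zsmul_eq_mul] at hIco
    nlinarith
  · have hl : (l i : ℝ) ≤ -toIocDiv hT (δ - T) (x i) := by exact_mod_cast hlq i
    have hIoc := toIocMod_le_right hT (δ - T) (x i)
    rw [toIocMod, zsmul_eq_mul] at hIoc
    nlinarith
  · rw [hc, sum_add_distrib, ← sum_mul]
    push_cast
    rfl

lemma toIocMod_sub_neg_eq_neg_toIcoMod (δ x : ℝ) :
    toIocMod hT (δ - T) (-x) = -toIcoMod hT (-δ) x := by
  rw [toIocMod_neg, neg_sub, sub_eq_add_neg T δ, toIcoMod_add_left']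
  ring

end Lifts

section Rotation

variable {ι E : Type*} [Fintype ι] [DecidableEq ι] [NormedAddCommGroup E] [InnerProductSpace ℂ E]
  [FiniteDimensional ℂ E] [CompleteSpace E] (b : OrthonormalBasis ι ℂ E) (θ : ι → ℝ)

lemma isBoundedLinearMap_diagonalOp : IsBoundedLinearMap ℝ (diagonalOp b) :=
  LinearMap.isLinear ((diagonalOp b : (ι → ℂ) →ₐ[ℂ] (E →L[ℂ] E)).toLinearMap.restrictScalars ℝ)
    |>.with_bound 1 fun μ => (one_mul ‖μ‖).symm ▸ norm_diagonalOp_le b μ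

lemma contDiff_diagonalOp_exp {n : WithTop ℕ∞} :
    ContDiff ℝ n fun t : ℝ => diagonalOp b fun i => exp ((t * θ i : ℝ) * I) :=
  (isBoundedLinearMap_diagonalOp b).contDiff.comp <| contDiff_pi.mpr fun _ =>
    ((ofRealCLM.contDiff.comp (contDiff_id.mul contDiff_const)).mul contDiff_const).cexp

lemma hasDerivAt_diagonalOp_exp (t : ℝ) :
    HasDerivAt (fun t : ℝ => diagonalOp b fun i => exp ((t * θ i : ℝ) * I))
      (diagonalOp b fun i => exp ((t * θ i : ℝ) * I) * (θ i * I)) t := by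
  refine (isBoundedLinearMap_diagonalOp b).hasFDerivAt.comp_hasDerivAt t
    (hasDerivAt_pi.mpr fun i => ?_)
  simpa using (((hasDerivAt_id t).mul_const (θ i)).ofReal_comp.mul_const I).cexp

lemma pathLength_diagonalOp_exp_le :
    pathLength (fun t => diagonalOp b fun i => exp ((t * θ i : ℝ) * I)) 0 1 ≤ ‖θ‖ := by
  have hspeed (t : ℝ) : ‖deriv (fun t : ℝ => diagonalOp b fun i => exp ((t * θ i : ℝ) * I)) t‖
      ≤ ‖θ‖ := by
    rw [(hasDerivAt_diagonalOp_exp b θ t).deriv]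
    refine (norm_diagonalOp_le b _).trans ((pi_norm_le_iff_of_nonneg (norm_nonneg θ)).mpr ?_)
    intro i
    simpa [norm_exp_ofReal_mul_I, -ofReal_mul] using norm_le_pi_norm θ i
  have hint := intervalIntegral.norm_integral_le_of_norm_le_const (a := 0) (b := 1)
    fun t _ => (norm_norm _).trans_le (hspeed t)
  rw [sub_zero, abs_one, mul_one] at hint
  exact (le_abs_self _).trans hint

end Rotation

section UniversalCover

variable {N : ℕ} {u v w : Op N} {φ ψ c : ℝ} {θ : Fin N → ℝ}

namespace InUCover

lemma mul (hu : InUCover N u φ) (hv : InUCover N v ψ) : InUCover N (u * v) (φ + ψ) := by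
  refine ⟨mul_mem hu.1 hv.1, (LinearMap.det_comp (u : Hsp N →ₗ[ℂ] Hsp N) v).trans ?_⟩
  rw [hu.2, hv.2, ← exp_add, ofReal_add, add_mul]

lemma star (hu : InUCover N u φ) : InUCover N (star u) (-φ) := by
  have hdet : (Star.star u).det * u.det = 1 := by
    rw [← LinearMap.det_comp]
    change (Star.star u * u).det = 1
    rw [Unitary.star_mul_self_of_mem hu.1]
    exact LinearMap.det_id
  refine ⟨Unitary.star_mem hu.1, (eq_inv_of_mul_eq_one_left hdet).trans ?_⟩
  rw [ContinuousLinearMap.det, hu.2, ← exp_neg, ofReal_neg, neg_mul]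

lemma mul_star (hv : InUCover N v ψ) (hu : InUCover N u φ) :
    InUCover N (v * Star.star u) (ψ - φ) :=
  sub_eq_add_neg ψ φ ▸ hv.mul hu.star

lemma exists_eq_diagonalOp_exp (hw : InUCover N w c) :
    ∃ (e : OrthonormalBasis (Fin N) ℂ (Hsp N)) (x : Fin N → ℝ) (k : ℤ),
      w = diagonalOp e (fun i => exp (x i * I)) ∧ c = ∑ i, x i + k * (2 * Real.pi) := by
  obtain ⟨hunit, hdet⟩ := hw
  have := isStarNormal_of_mem_unitary hunit
  obtain ⟨e, μ, rfl⟩ := exists_eq_diagonalOp_of_isStarNormal w finrank_euclideanSpace_fin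
  have hμ : μ = fun i => exp (arg (μ i) * I) := funext fun i => by
    simpa [norm_eq_one_of_diagonalOp_mem_unitary e μ hunit i] using
      (norm_mul_exp_arg_mul_I (μ i)).symm
  have hexp : exp (c * I) = exp ((∑ i, arg (μ i) : ℝ) * I) := by
    rw [← hdet]
    refine (det_diagonalOp e μ).trans ?_
    rw [hμ, ← exp_sum, ofReal_sum, sum_mul, ← hμ]
  obtain ⟨k, hk⟩ := exists_eq_add_int_mul_two_pi hexp
  exact ⟨e, fun i => arg (μ i), k, congrArg _ hμ, hk⟩

end InUCover

lemma inRSet_diagonalOp_exp (e : OrthonormalBasis (Fin N) ℂ (Hsp N)) (x : Fin N → ℝ)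
    (l : Fin N → ℤ) : InRSet N (diagonalOp e fun i => exp (x i * I))
      (∑ i, (x i + l i * (2 * Real.pi))) fun i => x i + l i * (2 * Real.pi) := by
  refine ⟨?_, rfl⟩
  simp only [eigenvalueMultiset, roots_charpoly_diagonalOp, exp_add_int_mul_two_pi_mul_I]

lemma InUCover.exists_inRSet (hN : 1 ≤ N) (hw : InUCover N w c) : ∃ θ, InRSet N w c θ := by
  obtain ⟨e, x, k, rfl, rfl⟩ := hw.exists_eq_diagonalOp_exp
  have hsum : ∑ i, (x i + (Pi.single ⟨0, hN⟩ k : Fin N → ℤ) i * (2 * Real.pi)) =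
      ∑ i, x i + k * (2 * Real.pi) := by
    rw [sum_add_distrib, ← sum_mul, ← Int.cast_sum, sum_pi_single', if_pos (mem_univ _)]
  exact ⟨_, hsum ▸ inRSet_diagonalOp_exp e x _⟩

lemma InRSet.exists_eq_diagonalOp_exp (hθ : InRSet N w c θ) (hw : w ∈ unitary (Op N)) :
    ∃ e : OrthonormalBasis (Fin N) ℂ (Hsp N), w = diagonalOp e fun i => exp (θ i * I) := by
  have := isStarNormal_of_mem_unitary hw
  obtain ⟨e, μ, rfl⟩ := exists_eq_diagonalOp_of_isStarNormal w finrank_euclideanSpace_fin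
  obtain ⟨σ, hσ⟩ := exists_perm_of_map_univ_eq (hθ.1.trans (roots_charpoly_diagonalOp e μ))
  refine ⟨e.reindex σ.symm, eq_diagonalOp fun i => ?_⟩
  rw [OrthonormalBasis.reindex_apply, Equiv.symm_symm, diagonalOp_apply_self, hσ]

lemma mval_le_iSup (hθ : InRSet N w c θ) : mval N w c ≤ ⨆ j, |θ j| :=
  csInf_le ⟨0, by rintro _ ⟨θ, -, rfl⟩; exact Real.iSup_nonneg fun _ => abs_nonneg _⟩ ⟨θ, hθ, rfl⟩

section LowerBound

variable {γ : ℝ → Op N} {f : ℝ → ℝ} {a b : ℝ}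

lemma exists_inRSet_abs_le_of_piecewiseC1On (h : PiecewiseC1On (fun t => (γ t, f t)) a b)
    (hcover : ∀ t ∈ Set.Icc a b, InUCover N (γ t) (f t)) (hγa : γ a = 1) (hfa : f a = 0)
    {ε : ℝ} (hε : ε ∈ Set.Ioo 0 (2 * Real.pi)) :
    ∃ θ, InRSet N (γ b) (f b) θ ∧ ∀ j, |θ j| ≤ ε + pathLength γ a b := by
  obtain ⟨e, x, k, hγb, hk⟩ :=
    (hcover b (Set.right_mem_Icc.mpr h.le)).exists_eq_diagonalOp_exp
  have hsmooth : ContDiff ℝ 1 fun p : Op N × ℝ => (star p.1, -p.2) :=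
    ((contDiff_star (E := Op N)).comp contDiff_fst).prodMk contDiff_snd.neg
  have hstar : PiecewiseC1On (fun t => (star (γ t), -f t)) a b := h.contDiff_comp hsmooth
  have hstarb : star (γ b) = diagonalOp e fun i => exp ((-x i : ℝ) * I) := by
    rw [hγb, ← map_star]
    congr 1
    ext i
    simp [← exp_conj]
  have hupper := le_sum_toIocMod_of_piecewiseC1On h (fun t ht => (hcover t ht).1)
    (fun t ht => (hcover t ht).2) hγa hfa hγb hε
  have hlower := le_sum_toIocMod_of_piecewiseC1On hstar (fun t ht => (hcover t ht).star.1)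
    (fun t ht => (hcover t ht).star.2) (by rw [hγa, star_one]) (by rw [hfa, neg_zero]) hstarb hε
  simp only [pathLength_star, toIocMod_sub_neg_eq_neg_toIcoMod, sum_neg_distrib,
    neg_le_neg_iff] at hlower
  obtain ⟨l, hl, hsum⟩ := exists_abs_add_int_mul_le_of_sum_le Real.two_pi_pos hk hlower hupper
  exact ⟨_, hγb ▸ hsum ▸ inRSet_diagonalOp_exp e x l, hl⟩

lemma mval_le_pathLength (hN : 1 ≤ N) (h : PiecewiseC1On (fun t => (γ t, f t)) a b)
    (hcover : ∀ t ∈ Set.Icc a b, InUCover N (γ t) (f t)) :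
    mval N (γ b * star (γ a)) (f b - f a) ≤ pathLength γ a b := by
  have : Nonempty (Fin N) := ⟨⟨0, hN⟩⟩
  have ha := hcover a (Set.left_mem_Icc.mpr h.le)
  have htranslate : PiecewiseC1On (fun t => (γ t * star (γ a), f t - f a)) a b :=
    h.contDiff_comp (g := fun p : Op N × ℝ => (p.1 * star (γ a), p.2 - f a)) (by fun_prop)
  have hlength : pathLength (fun t => γ t * star (γ a)) a b = pathLength γ a b :=
    pathLength_linearIsometryEquiv_comp (Unitary.mulRight ℝ ⟨_, ha.star.1⟩) γ a b
  refine le_of_forall_pos_le_add fun ε hε => ?_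
  obtain ⟨θ, hθ, hbound⟩ := exists_inRSet_abs_le_of_piecewiseC1On htranslate
    (fun t ht => (hcover t ht).mul_star ha) (Unitary.mul_star_self_of_mem ha.1) (sub_self _)
    (ε := min ε Real.pi) ⟨lt_min hε Real.pi_pos, min_lt_of_right_lt (by linarith [Real.pi_pos])⟩
  refine (mval_le_iSup hθ).trans (ciSup_le fun j => (hbound j).trans ?_)
  rw [hlength, add_comm]
  gcongr
  exact min_le_left _ _

end LowerBound

section UpperBound

lemma ucoverDist_le_pathLength {γ : ℝ → Op N} {f : ℝ → ℝ} {a b : ℝ}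
    (h : PiecewiseC1On (fun t => (γ t, f t)) a b)
    (hcover : ∀ t ∈ Set.Icc a b, InUCover N (γ t) (f t)) :
    ucoverDist N (γ a) (f a) (γ b) (f b) ≤ pathLength γ a b :=
  csInf_le ⟨0, by rintro _ ⟨a, b, γ, f, hab, -, -, -, -, -, -, rfl⟩; exact pathLength_nonneg γ hab⟩
    ⟨a, b, γ, f, h.le, h, hcover, rfl, rfl, rfl, rfl, rfl⟩

lemma InRSet.exists_piecewiseC1On_pathLength_le (hθ : InRSet N w c θ) (hw : w ∈ unitary (Op N))
    (hu : InUCover N u φ) : ∃ (γ : ℝ → Op N) (f : ℝ → ℝ),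
      PiecewiseC1On (fun t => (γ t, f t)) 0 1 ∧ (∀ t ∈ Set.Icc 0 1, InUCover N (γ t) (f t)) ∧
      γ 0 = u ∧ f 0 = φ ∧ γ 1 = w * u ∧ f 1 = c + φ ∧ pathLength γ 0 1 ≤ ⨆ j, |θ j| := by
  obtain ⟨e, rfl⟩ := hθ.exists_eq_diagonalOp_exp hw
  let D (t : ℝ) : Op N := diagonalOp e fun i => exp ((t * θ i : ℝ) * I)
  have hD (t : ℝ) : InUCover N (D t) (t * c) := by
    refine ⟨diagonalOp_exp_mem_unitary e fun i => t * θ i, (det_diagonalOp e _).trans ?_⟩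
    rw [← exp_sum, ← sum_mul, ← ofReal_sum, ← mul_sum, hθ.2]
  have hlength : pathLength (fun t => D t * u) 0 1 = pathLength D 0 1 :=
    pathLength_linearIsometryEquiv_comp (Unitary.mulRight ℝ ⟨u, hu.1⟩) D 0 1
  refine ⟨fun t => D t * u, fun t => t * c + φ, .of_contDiff ?_ zero_le_one,
    fun t _ => (hD t).mul hu, ?_, ?_, ?_, ?_, ?_⟩
  · exact ((contDiff_diagonalOp_exp e θ).mul contDiff_const).prodMk (by fun_prop)
  · simp [D, show (fun _ => 1 : Fin N → ℂ) = 1 from rfl]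
  · simp
  · simp [D]
  · simp
  · rw [hlength]
    refine (pathLength_diagonalOp_exp_le e θ).trans ?_
    exact (pi_norm_le_iff_of_nonneg (Real.iSup_nonneg fun _ => abs_nonneg _)).mpr
      (le_ciSup (Set.finite_range fun j => |θ j|).bddAbove)

end UpperBound

end UniversalCover

end

/-- for any `(u,φ), (v,ψ) ∈ Ũ(H)`, `d̃((u,φ),(v,ψ)) = m`, the
minimum over `θ ∈ R` of `max_j |θ_j|`. -/
theorem ucoverDist_eq_mval (N : ℕ) (hN : 1 ≤ N) (u v : unitary (Op N))
    (φ ψ : ℝ) (hu : InUCover N ↑u φ) (hv : InUCover N ↑v ψ) :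
    ucoverDist N ↑u φ ↑v ψ = mval N ↑(v * u⁻¹) (ψ - φ) := by
  change _ = mval N (↑v * star ↑u) (ψ - φ)
  have hw := hv.mul_star hu
  have hgeodesic {θ : Fin N → ℝ} (hθ : InRSet N (↑v * star ↑u) (ψ - φ) θ) :=
    hθ.exists_piecewiseC1On_pathLength_le hw.1 hu
  simp only [mul_assoc, Unitary.coe_star_mul_self, mul_one, sub_add_cancel] at hgeodesic
  obtain ⟨θ₀, hθ₀⟩ := hw.exists_inRSet hN
  refine le_antisymm (le_csInf ⟨_, θ₀, hθ₀, rfl⟩ ?_) (le_csInf ?_ ?_)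
  · rintro _ ⟨θ, hθ, rfl⟩
    obtain ⟨γ, f, hγ, hcover, hγ0, hf0, hγ1, hf1, hlength⟩ := hgeodesic hθ
    rw [← hγ0, ← hf0, ← hγ1, ← hf1]
    exact (ucoverDist_le_pathLength hγ hcover).trans hlength
  · obtain ⟨γ, f, hγ, hcover, hγ0, hf0, hγ1, hf1, -⟩ := hgeodesic hθ₀
    exact ⟨_, 0, 1, γ, f, zero_le_one, hγ, hcover, hγ0, hf0, hγ1, hf1, rfl⟩
  · rintro _ ⟨a, b, γ, f, -, hγ, hcover, hγa, hfa, hγb, hfb, rfl⟩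
    rw [← hγa, ← hfa, ← hγb, ← hfb]
    exact mval_le_pathLength hN hγ hcover
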